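/- Let C_α = ∫_ℝ |x|^α (2π)^{−1/2} e^{−x²/2} dx for α ≥ 0. Then for every real δ ≥ 1, every integer j ≥ 0 and every real y, the polynomial identity P^{(j)}_{δ−1}(y) = Q^{(j)}_{δ−1}(y) holds, where P^{(j)}_{δ−1}(y) = (1/C_{δ−1+2j}) · ∏_{l=1}^{j} (2y + δ − 2 + 2l) and Q^{(j)}_{δ−1}(y) = Σ_{k=0}^{j} binom(j,k) · 2^k · y(y−1)⋯(y−k+1) / C_{δ−1+2k} (with the empty products for j = 0 resp. k = 0 equal to 1). -/

import Mathlib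

open MeasureTheory

/-- `C_α = ∫ |x|^α (2π)^{−1/2} e^{−x²/2} dx`, the `α`-th absolute moment of a
standard Gaussian. -/
noncomputable def gaussAbsMoment (α : ℝ) : ℝ :=
  ∫ x : ℝ, |x| ^ α * (Real.sqrt (2 * Real.pi))⁻¹ * Real.exp (-x ^ 2 / 2)

theorem gaussAbsMoment_eq (α : ℝ) (hα : 0 ≤ α) :
    gaussAbsMoment α = (Real.sqrt (2 * Real.pi))⁻¹ * (2 * ((1 / 2 : ℝ) ^ (-(α + 1) / 2) * (1 / 2) *
      Real.Gamma ((α + 1) / 2))) := by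
  unfold gaussAbsMoment
  have h := integral_comp_abs (f := fun x : ℝ => x ^ α * Real.exp (-(1 / 2) * x ^ (2 : ℝ)))
  rw [integral_rpow_mul_exp_neg_mul_rpow (by norm_num) (by linarith) (by norm_num)] at h
  rw [← h, ← integral_const_mul]
  congr 1
  ext x
  have h1 : |x| ^ (2 : ℝ) = x ^ 2 := by
    rw [Real.rpow_two, sq_abs]
  simp only [h1]
  rw [show -(1 / 2) * x ^ 2 = -x ^ 2 / 2 by ring]
  ring

theorem gaussAbsMoment_rec (α : ℝ) (hα : 0 ≤ α) :
    gaussAbsMoment (α + 2) = (α + 1) * gaussAbsMoment α := by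
  rw [gaussAbsMoment_eq _ hα, gaussAbsMoment_eq _ (by linarith)]
  rw [show (α + 2 + 1) / 2 = (α + 1) / 2 + 1 by ring, Real.Gamma_add_one (by linarith),
    show -(α + 2 + 1) / 2 = -(α + 1) / 2 - 1 by ring, Real.rpow_sub_one (by norm_num)]
  ring

/-- Polynomial identity `P^{(j)}_{δ−1}(y) = Q^{(j)}_{δ−1}(y)`: for `δ ≥ 1`,
`j ∈ ℕ` and `y ∈ ℝ`,
`(1/C_{δ−1+2j}) ∏_{l=1}^{j} (2y + δ − 2 + 2l)
  = ∑_{k=0}^{j} binom(j,k) 2^k y(y−1)⋯(y−k+1) / C_{δ−1+2k}`. -/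
theorem gaussAbsMoment_polynomial_identity (δ : ℝ) (hδ : 1 ≤ δ) (j : ℕ) (y : ℝ) :
    (1 / gaussAbsMoment (δ - 1 + 2 * (j : ℝ)))
        * ∏ l ∈ Finset.Icc 1 j, (2 * y + δ - 2 + 2 * (l : ℝ))
      = ∑ k ∈ Finset.range (j + 1),
          (Nat.choose j k : ℝ) * 2 ^ k * (∏ l ∈ Finset.range k, (y - l))
            / gaussAbsMoment (δ - 1 + 2 * (k : ℝ)) := by
  induction j generalizing δ y with
  | zero => simp
  | succ j ih =>
    have h1 := ih δ hδ y
    have h2 := ih (δ + 2) (by linarith) (y - 1)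
    have hS : ∑ k ∈ Finset.range (j + 1 + 1),
          (Nat.choose (j + 1) k : ℝ) * 2 ^ k * (∏ l ∈ Finset.range k, (y - l))
            / gaussAbsMoment (δ - 1 + 2 * (k : ℝ))
        = ∑ k ∈ Finset.range (j + 1),
          (Nat.choose j k : ℝ) * 2 ^ k * (∏ l ∈ Finset.range k, (y - l))
            / gaussAbsMoment (δ - 1 + 2 * (k : ℝ))
        + 2 * y * ∑ k ∈ Finset.range (j + 1),
          (Nat.choose j k : ℝ) * 2 ^ k * (∏ l ∈ Finset.range k, (y - 1 - l))
            / gaussAbsMoment (δ + 2 - 1 + 2 * (k : ℝ)) := by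
      have e : ∑ k ∈ Finset.range (j + 1),
          (Nat.choose j k : ℝ) * 2 ^ k * (∏ l ∈ Finset.range k, (y - l))
            / gaussAbsMoment (δ - 1 + 2 * (k : ℝ)) = ∑ k ∈ Finset.range (j + 1 + 1),
          (Nat.choose j k : ℝ) * 2 ^ k * (∏ l ∈ Finset.range k, (y - l))
            / gaussAbsMoment (δ - 1 + 2 * (k : ℝ)) := by
        rw [Finset.sum_range_succ _ (j + 1)]
        simp
      rw [e, Finset.sum_range_succ', Finset.sum_range_succ' _ (j + 1), Finset.mul_sum,
        add_right_comm, ← Finset.sum_add_distrib]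
      congr 1
      · apply Finset.sum_congr rfl
        intro k _
        have hp : ∏ l ∈ Finset.range (k + 1), (y - (l : ℝ))
            = (∏ l ∈ Finset.range k, (y - 1 - (l : ℝ))) * y := by
          rw [Finset.prod_range_succ']
          congr 1
          · apply Finset.prod_congr rfl
            intro l _
            push_cast
            ring
          · simp
        rw [hp, Nat.choose_succ_succ,
          show δ + 2 - 1 + 2 * (k : ℝ) = δ - 1 + 2 * ((k + 1 : ℕ) : ℝ) by push_cast; ring]
        push_cast
        ring
      · simp
    rw [hS, ← h1, ← h2]
    have hj : (0 : ℝ) ≤ j := Nat.cast_nonneg j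
    have hr := gaussAbsMoment_rec (δ - 1 + 2 * (j : ℝ)) (by linarith)
    rw [show δ - 1 + 2 * ((j + 1 : ℕ) : ℝ) = δ - 1 + 2 * (j : ℝ) + 2 by push_cast; ring,
      show δ + 2 - 1 + 2 * (j : ℝ) = δ - 1 + 2 * (j : ℝ) + 2 by ring, hr,
      Finset.prod_Icc_succ_top (by omega)]
    simp only [show 2 * (y - 1) + (δ + 2) - 2 = 2 * y + δ - 2 by ring]
    have hne : δ - 1 + 2 * (j : ℝ) + 1 ≠ 0 := by linarith
    have hi : 1 / gaussAbsMoment (δ - 1 + 2 * (j : ℝ)) = (δ - 1 + 2 * (j : ℝ) + 1) *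
        (1 / ((δ - 1 + 2 * (j : ℝ) + 1) * gaussAbsMoment (δ - 1 + 2 * (j : ℝ)))) := by
      rw [one_div, one_div, mul_inv, mul_inv_cancel_left₀ hne]
    rw [hi]
    push_cast
    ring
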